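/- In every circular 3G matching market of size 3, for any fixed woman x there exists a stable matching M such that either x is matched in M with her most-preferred man, or x is matched in M with her second-most-preferred man and x's most-preferred man is matched in M with his most-preferred dog. (By the cyclic symmetry of the roles, the same holds with a fixed man or a fixed dog in place of x.) -/

import Mathlib

/-!
By cyclic rotation of the three roles it suffices to treat a fixed woman `x`. Relabel the agents
so that `x` is woman `0`, her list of men is `0, 1, 2`, and the list of dogs of her favorite man
`0` is also `0, 1, 2`. The required property of `(σ, τ)` then reads
`σ 0 = 0 ∨ (σ 0 = 1 ∧ τ 0 = 0)`. With triples written (woman, man, dog), the four matchings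

* `A = {(0,0,0), (1,1,1), (2,2,2)}`,
* `B = {(0,0,2), (1,1,1), (2,2,0)}`,
* `C = {(0,0,1), (1,2,2), (2,1,0)}`,
* `D = {(0,1,2), (1,0,0), (2,2,1)}`

all have this property, and they cannot all be unstable. Indeed the two normalized lists leave
very few triples that can block each of them:

* `A`: `(1,2,0)`, `(2,1,0)`;
* `B`: `(1,0,0)`, `(1,2,2)`, `(2,0,1)`, `(2,1,2)`;
* `C`: `(1,0,0)`, `(1,1,1)`, `(2,2,1)`;
* `D`: `(1,1,1)`, `(1,2,2)`, `(2,1,0)`;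

and any choice of one blocking triple for each matching makes some agent's preferences cyclic.
This is `exists_stable_of_normalized`; `exists_stable_woman` removes the normalization.
-/

/-- A circular 3G matching market of size `N`: the women, the men and the dogs are each
indexed by `Fin N`.  `wpref a` is woman `a`'s strict preference list on the men, given as
the bijection sending each position to the man in that position (position `0` = most
preferred); similarly `mpref b` is man `b`'s preference list on the dogs and `dpref c` is
dog `c`'s preference list on the women. -/
structure CircularMarket (N : ℕ) where
  wpref : Fin N → (Fin N ≃ Fin N)
  mpref : Fin N → (Fin N ≃ Fin N)
  dpref : Fin N → (Fin N ≃ Fin N)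

namespace CircularMarket

variable {N : ℕ}

/-- Woman `a` strictly prefers man `b` to man `b'`. -/
def wPrefers (Mkt : CircularMarket N) (a b b' : Fin N) : Prop :=
  (Mkt.wpref a).symm b < (Mkt.wpref a).symm b'

/-- Man `b` strictly prefers dog `c` to dog `c'`. -/
def mPrefers (Mkt : CircularMarket N) (b c c' : Fin N) : Prop :=
  (Mkt.mpref b).symm c < (Mkt.mpref b).symm c'

/-- Dog `c` strictly prefers woman `a` to woman `a'`. -/
def dPrefers (Mkt : CircularMarket N) (c a a' : Fin N) : Prop :=
  (Mkt.dpref c).symm a < (Mkt.dpref c).symm a'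

/-- The favorite (most preferred) man of woman `a`. -/
def wFav (Mkt : CircularMarket N) (a : Fin N) : Fin N := Mkt.wpref a ⟨0, a.pos⟩

/-- The favorite dog of man `b`. -/
def mFav (Mkt : CircularMarket N) (b : Fin N) : Fin N := Mkt.mpref b ⟨0, b.pos⟩

/-- The favorite woman of dog `c`. -/
def dFav (Mkt : CircularMarket N) (c : Fin N) : Fin N := Mkt.dpref c ⟨0, c.pos⟩

/-- A 3G matching is given by a pair of bijections: `σ` matching each woman to a man and
`τ` matching each man to a dog (so woman `a` is in the triple `(a, σ a, τ (σ a))`).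
The triple `(a, b, c)` blocks the matching `(σ, τ)` if each of its members strictly
prefers its partner in the triple to its current partner in the matching. -/
def Blocks (Mkt : CircularMarket N) (σ τ : Equiv.Perm (Fin N)) (a b c : Fin N) : Prop :=
  Mkt.wPrefers a b (σ a) ∧ Mkt.mPrefers b c (τ b) ∧ Mkt.dPrefers c a (σ.symm (τ.symm c))

/-- A matching is stable if no triple blocks it. -/
def IsStable (Mkt : CircularMarket N) (σ τ : Equiv.Perm (Fin N)) : Prop :=
  ∀ a b c : Fin N, ¬ Mkt.Blocks σ τ a b c

end CircularMarket

namespace CircularMarket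

/-- The market with the roles rotated: men, dogs and women of `Mkt` become the women, men and
dogs, respectively. -/
def rotate {N : ℕ} (Mkt : CircularMarket N) : CircularMarket N where
  wpref := Mkt.mpref
  mpref := Mkt.dpref
  dpref := Mkt.wpref

/-- A matching `(σ, τ)` of the rotated market sends men to dogs by `σ` and dogs to women by `τ`,
so in the original market it sends women to men by the inverse of `σ.trans τ`. -/
lemma IsStable.of_rotate {N : ℕ} {Mkt : CircularMarket N} {σ τ : Equiv.Perm (Fin N)}
    (h : Mkt.rotate.IsStable σ τ) : Mkt.IsStable (σ.trans τ).symm σ := by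
  rintro a b c ⟨hw, hm, hd⟩
  refine h b c a ⟨hm, ?_, ?_⟩
  · simpa [dPrefers, mPrefers, rotate] using hd
  · simpa [dPrefers, wPrefers, rotate] using hw

/-- The market in which woman `a`, man `b` and dog `c` are the agents `α a`, `β b` and `γ c` of
`Mkt`. -/
def relabel {N : ℕ} (Mkt : CircularMarket N) (α β γ : Equiv.Perm (Fin N)) :
    CircularMarket N where
  wpref a := (Mkt.wpref (α a)).trans β.symm
  mpref b := (Mkt.mpref (β b)).trans γ.symm
  dpref c := (Mkt.dpref (γ c)).trans α.symm

lemma IsStable.of_relabel {N : ℕ} {Mkt : CircularMarket N} {α β γ σ τ : Equiv.Perm (Fin N)}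
    (h : (Mkt.relabel α β γ).IsStable σ τ) :
    Mkt.IsStable ((α.symm.trans σ).trans β) ((β.symm.trans τ).trans γ) := by
  rintro a b c ⟨hw, hm, hd⟩
  refine h (α.symm a) (β.symm b) (γ.symm c) ⟨?_, ?_, ?_⟩
  · simpa [wPrefers, relabel] using hw
  · simpa [mPrefers, relabel] using hm
  · simpa [dPrefers, relabel] using hd

/-- In a normalized market one of the matchings `A`, `B`, `C`, `D` is stable. -/
lemma exists_stable_of_normalized (Mkt : CircularMarket 3)
    (hw : Mkt.wpref 0 = Equiv.refl _) (hm : Mkt.mpref 0 = Equiv.refl _) :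
    ∃ σ τ : Equiv.Perm (Fin 3), Mkt.IsStable σ τ ∧ (σ 0 = 0 ∨ (σ 0 = 1 ∧ τ 0 = 0)) := by
  by_contra! hcon
  have w0 (b b' : Fin 3) : Mkt.wPrefers 0 b b' ↔ b < b' := by simp [wPrefers, hw]
  have m0 (c c' : Fin 3) : Mkt.mPrefers 0 c c' ↔ c < c' := by simp [mPrefers, hm]
  have wi (a b : Fin 3) : ¬ Mkt.wPrefers a b b := lt_irrefl _
  have mi (a b : Fin 3) : ¬ Mkt.mPrefers a b b := lt_irrefl _
  have di (a b : Fin 3) : ¬ Mkt.dPrefers a b b := lt_irrefl _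
  have blocked (σ τ : Equiv.Perm (Fin 3)) (h : σ 0 = 0 ∨ (σ 0 = 1 ∧ τ 0 = 0)) :
      ∃ a b c, Mkt.Blocks σ τ a b c := by
    by_contra! hs
    have := hcon σ τ hs
    tauto
  have hA := blocked (Equiv.refl _) (Equiv.refl _) (by decide)
  have hB := blocked (Equiv.refl _) (Equiv.swap 0 2) (by decide)
  have hC := blocked (Equiv.swap 1 2) (Equiv.swap 0 1) (by decide)
  have hD := blocked (Equiv.swap 0 1) (Equiv.swap 1 2) (by decide)
  -- Every triple that would need an agent to prefer its current partner strictly to that same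
  -- partner, or to contradict the list `0, 1, 2` of woman `0` or man `0`, simplifies to `False`;
  -- the triples listed at the top of the file remain.
  simp [Blocks, Fin.exists_fin_succ, w0, m0, wi, mi, di, Equiv.swap_apply_def] at hA hB hC hD
  simp only [wPrefers, mPrefers, dPrefers] at hA hB hC hD
  -- Each choice of one blocking triple per matching gives a cycle of strict inequalities.
  omega

lemma exists_stable_woman (Mkt : CircularMarket 3) (x : Fin 3) :
    ∃ σ τ : Equiv.Perm (Fin 3), Mkt.IsStable σ τ ∧
      (σ x = Mkt.wFav x ∨
        (σ x = Mkt.wpref x 1 ∧ τ (Mkt.wFav x) = Mkt.mFav (Mkt.wFav x))) := by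
  obtain ⟨σ, τ, hst, h⟩ := exists_stable_of_normalized
    (Mkt.relabel (Equiv.swap 0 x) (Mkt.wpref x) (Mkt.mpref (Mkt.wFav x)))
    (by simp [relabel])
    (by simp [relabel, wFav])
  refine ⟨_, _, hst.of_relabel, ?_⟩
  rcases h with h | ⟨h, h'⟩
  · left
    simp [h, wFav]
  · right
    simp [h, h', wFav, mFav]

end CircularMarket

/-- In every circular 3G matching market of size 3, for any fixed woman `x` there is a
stable matching in which either `x` gets her favorite man, or `x` gets her second-most
preferred man and her favorite man gets his favorite dog; and by cyclic symmetry the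
analogous statements hold for a fixed man and for a fixed dog. -/
theorem circular_3GSM_size_three_stable_with_content (Mkt : CircularMarket 3) :
    (∀ x : Fin 3, ∃ σ τ : Equiv.Perm (Fin 3), Mkt.IsStable σ τ ∧
      (σ x = Mkt.wFav x ∨
        (σ x = Mkt.wpref x 1 ∧ τ (Mkt.wFav x) = Mkt.mFav (Mkt.wFav x)))) ∧
    (∀ y : Fin 3, ∃ σ τ : Equiv.Perm (Fin 3), Mkt.IsStable σ τ ∧
      (τ y = Mkt.mFav y ∨
        (τ y = Mkt.mpref y 1 ∧ σ.symm (τ.symm (Mkt.mFav y)) = Mkt.dFav (Mkt.mFav y)))) ∧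
    (∀ z : Fin 3, ∃ σ τ : Equiv.Perm (Fin 3), Mkt.IsStable σ τ ∧
      (σ.symm (τ.symm z) = Mkt.dFav z ∨
        (σ.symm (τ.symm z) = Mkt.dpref z 1 ∧ σ (Mkt.dFav z) = Mkt.wFav (Mkt.dFav z)))) := by
  refine ⟨Mkt.exists_stable_woman, fun y => ?_, fun z => ?_⟩
  · obtain ⟨σ, τ, hst, h⟩ := Mkt.rotate.exists_stable_woman y
    refine ⟨_, _, hst.of_rotate, ?_⟩
    simpa [CircularMarket.rotate, CircularMarket.wFav, CircularMarket.mFav,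
      CircularMarket.dFav] using h
  · obtain ⟨σ, τ, hst, h⟩ := Mkt.rotate.rotate.exists_stable_woman z
    refine ⟨_, _, hst.of_rotate.of_rotate, ?_⟩
    simpa [CircularMarket.rotate, CircularMarket.wFav, CircularMarket.mFav,
      CircularMarket.dFav] using h
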